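/- Let a, b > 0 and let T : ℝ^m → ℝ^m be given by T(x) = [1 + a exp(−‖x‖²/b)]⁻¹ x. Then T is differentiable at every x ∈ ℝ^m with derivative D_xT = [1 + a exp(−‖x‖²/b)]⁻¹ · (I_m + 2ab⁻¹ exp(−‖x‖²/b)[1 + a exp(−‖x‖²/b)]⁻¹ xx'), and the determinant of D_xT equals [1 + a exp(−‖x‖²/b)]^{−m} · (1 + 2b⁻¹[1 + a⁻¹ exp(‖x‖²/b)]⁻¹ ‖x‖²), which is always positive. -/

import Mathlib

open MeasureTheory Matrix Real Filter Topology ENNReal NNReal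

noncomputable section

/-- Euclidean norm of a finite tuple. -/
def enorm2 {ι : Type*} [Fintype ι] (v : ι → ℝ) : ℝ := Real.sqrt (∑ i, v i ^ 2)

/-- The `N(0, σ² I)` distribution on `ι → ℝ`, given by its Lebesgue density. -/
def gaussPi (ι : Type*) [Fintype ι] (σ2 : ℝ) : Measure (ι → ℝ) :=
  volume.withDensity fun x => ENNReal.ofReal
    ((2 * π * σ2) ^ (-(Fintype.card ι : ℝ) / 2) * Real.exp (-(enorm2 x) ^ 2 / (2 * σ2)))

/-- The Lebesgue density of the `N(0, σ² Q⁻¹)` distribution on `ι → ℝ`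
(for `Q` symmetric positive definite). -/
def gaussCovDens {ι : Type*} [Fintype ι] [DecidableEq ι] (σ2 : ℝ) (Q : Matrix ι ι ℝ)
    (x : ι → ℝ) : ℝ :=
  (2 * π * σ2) ^ (-(Fintype.card ι : ℝ) / 2) * Real.sqrt Q.det *
    Real.exp (-(x ⬝ᵥ Q.mulVec x) / (2 * σ2))

/-- The `N(0, σ² Q⁻¹)` distribution on `ι → ℝ` (for `Q` symmetric positive definite),
given by its Lebesgue density. -/
def gaussCov {ι : Type*} [Fintype ι] [DecidableEq ι] (σ2 : ℝ) (Q : Matrix ι ι ℝ) :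
    Measure (ι → ℝ) :=
  volume.withDensity fun x => ENNReal.ofReal (gaussCovDens σ2 Q x)

/-- The positive semidefinite square root of a positive semidefinite matrix
(Mathlib's former `Matrix.PosSemidef.sqrt`, for real matrices). -/
def Matrix.PosSemidef.sqrt {ι : Type*} [Fintype ι] [DecidableEq ι] {A : Matrix ι ι ℝ}
    (hA : A.PosSemidef) : Matrix ι ι ℝ :=
  hA.isHermitian.eigenvectorUnitary.1 * diagonal (Real.sqrt ∘ hA.isHermitian.eigenvalues) *
    (star hA.isHermitian.eigenvectorUnitary : Matrix ι ι ℝ)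

open Classical in
/-- Symmetric positive semidefinite square root (junk value `0` off the psd cone). -/
def msqrt {ι : Type*} [Fintype ι] [DecidableEq ι] (A : Matrix ι ι ℝ) : Matrix ι ι ℝ :=
  if h : A.PosSemidef then h.sqrt else 0

open Classical in
/-- Smallest eigenvalue of a symmetric matrix (junk value `0` otherwise). -/
def lamMin {ι : Type*} [Fintype ι] [DecidableEq ι] (A : Matrix ι ι ℝ) : ℝ :=
  if h : A.IsHermitian then ⨅ i, h.eigenvalues i else 0

open Classical in
/-- Largest eigenvalue of a symmetric matrix (junk value `0` otherwise). -/
def lamMax {ι : Type*} [Fintype ι] [DecidableEq ι] (A : Matrix ι ι ℝ) : ℝ :=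
  if h : A.IsHermitian then ⨆ i, h.eigenvalues i else 0

variable {n k₁ k₂ : ℕ}

/-- First block of columns of the design matrix. -/
def X1 (X : Matrix (Fin n) (Fin k₁ ⊕ Fin k₂) ℝ) : Matrix (Fin n) (Fin k₁) ℝ :=
  X.submatrix id Sum.inl

/-- Second block of columns of the design matrix. -/
def X2 (X : Matrix (Fin n) (Fin k₁ ⊕ Fin k₂) ℝ) : Matrix (Fin n) (Fin k₂) ℝ :=
  X.submatrix id Sum.inr

/-- Unrestricted least squares estimator. -/
def betaU (X : Matrix (Fin n) (Fin k₁ ⊕ Fin k₂) ℝ) (Y : Fin n → ℝ) : (Fin k₁ ⊕ Fin k₂) → ℝ :=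
  (Xᵀ * X)⁻¹.mulVec (Xᵀ.mulVec Y)

/-- Restricted least squares estimator. -/
def betaR (X : Matrix (Fin n) (Fin k₁ ⊕ Fin k₂) ℝ) (Y : Fin n → ℝ) : (Fin k₁ ⊕ Fin k₂) → ℝ :=
  Sum.elim (((X1 X)ᵀ * X1 X)⁻¹.mulVec ((X1 X)ᵀ.mulVec Y)) (fun _ => 0)

/-- Risk estimate of the restricted model. -/
def rR (X : Matrix (Fin n) (Fin k₁ ⊕ Fin k₂) ℝ) (σ2 : ℝ) (Y : Fin n → ℝ) : ℝ :=
  Y ⬝ᵥ Y - betaR X Y ⬝ᵥ (Xᵀ * X).mulVec (betaR X Y) + σ2 * (2 * k₁ - n)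

/-- Risk estimate of the unrestricted model. -/
def rU (X : Matrix (Fin n) (Fin k₁ ⊕ Fin k₂) ℝ) (σ2 : ℝ) (Y : Fin n → ℝ) : ℝ :=
  Y ⬝ᵥ Y - betaU X Y ⬝ᵥ (Xᵀ * X).mulVec (betaU X Y) + σ2 * (2 * (k₁ + k₂) - n)

/-- The model averaging weight `λ̂`. -/
def lamHat (α σ2 : ℝ) (X : Matrix (Fin n) (Fin k₁ ⊕ Fin k₂) ℝ) (Y : Fin n → ℝ) : ℝ :=
  Real.exp (-(α * rR X σ2 Y) / σ2) /
    (Real.exp (-(α * rR X σ2 Y) / σ2) + Real.exp (-(α * rU X σ2 Y) / σ2))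

/-- Leung and Barron's model averaging estimator `β̃`. -/
def mavg (α σ2 : ℝ) (X : Matrix (Fin n) (Fin k₁ ⊕ Fin k₂) ℝ) (Y : Fin n → ℝ) :
    (Fin k₁ ⊕ Fin k₂) → ℝ :=
  lamHat α σ2 X Y • betaR X Y + (1 - lamHat α σ2 X Y) • betaU X Y

/-- Projection on the column space of `X₁`. -/
def projR (X : Matrix (Fin n) (Fin k₁ ⊕ Fin k₂) ℝ) : Matrix (Fin n) (Fin n) ℝ :=
  X1 X * ((X1 X)ᵀ * X1 X)⁻¹ * (X1 X)ᵀ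

/-- Projection on the column space of `X`. -/
def projU (X : Matrix (Fin n) (Fin k₁ ⊕ Fin k₂) ℝ) : Matrix (Fin n) (Fin n) ℝ :=
  X * (Xᵀ * X)⁻¹ * Xᵀ

/-- The distribution `P_{n,β,σ}` of `Y = Xβ + u`, `u ~ N(0, σ² Iₙ)`. -/
def Pmeas (X : Matrix (Fin n) (Fin k₁ ⊕ Fin k₂) ℝ) (β : (Fin k₁ ⊕ Fin k₂) → ℝ) (σ2 : ℝ) :
    Measure (Fin n → ℝ) :=
  (gaussPi (Fin n) σ2).map (fun u => X.mulVec β + u)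

/-- The function `h_{a,b}(ξ) = ξ / (1 + a exp(−ξ²/b))`. -/
def hfun (a b ξ : ℝ) : ℝ := ξ / (1 + a * Real.exp (-ξ ^ 2 / b))

/-- The inverse `g_{a,b}` of `h_{a,b}`. -/
def gfun (a b : ℝ) : ℝ → ℝ := Function.invFun (hfun a b)

open Classical in
/-- `g(‖w‖) w / ‖w‖`, with the convention that this is `0` for `w = 0`. -/
def gdir (a b : ℝ) {ι : Type*} [Fintype ι] (w : ι → ℝ) : ι → ℝ :=
  if w = 0 then 0 else (gfun a b (enorm2 w) / enorm2 w) • w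


/-- The finite-sample density `f_{n,β,σ}` of `√n(β̃ − β)` (Theorem 3 of the paper). -/
def fdens {n k₁ k₂ : ℕ} (X : Matrix (Fin n) (Fin k₁ ⊕ Fin k₂) ℝ)
    (β : (Fin k₁ ⊕ Fin k₂) → ℝ) (σ2 α : ℝ) (t : (Fin k₁ ⊕ Fin k₂) → ℝ) : ℝ :=
  let a := Real.exp (2 * α * k₂)
  let b := σ2 / α
  let S := (X2 X)ᵀ * (1 - projR X) * X2 X
  let w := (Real.sqrt n)⁻¹ • (msqrt S).mulVec ((t ∘ Sum.inr) + Real.sqrt n • (β ∘ Sum.inr))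
  (2 * π * σ2) ^ (-((k₁ : ℝ) + k₂) / 2) * Real.sqrt (((n : ℝ)⁻¹ • (Xᵀ * X)).det) *
    Real.exp (-(enorm2 ((Real.sqrt n)⁻¹ •
        ((msqrt ((X1 X)ᵀ * X1 X)).mulVec (t ∘ Sum.inl) +
          ((msqrt ((X1 X)ᵀ * X1 X))⁻¹ * (X1 X)ᵀ * X2 X).mulVec (t ∘ Sum.inr)))) ^ 2 /
      (2 * σ2)) *
    (1 + Real.exp (-(α / σ2) * gfun a b (enorm2 w) ^ 2 + 2 * α * k₂)) ^ (k₂ : ℕ) *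
    (1 + (2 * α / σ2) * gfun a b (enorm2 w) ^ 2 *
        (1 + Real.exp ((α / σ2) * gfun a b (enorm2 w) ^ 2 - 2 * α * k₂))⁻¹)⁻¹ *
    Real.exp (-(enorm2 (gdir a b w - (msqrt S).mulVec (β ∘ Sum.inr))) ^ 2 / (2 * σ2))

/-- The density `f_{∞,γ}` of the limiting distribution (formula (13) of the paper),
stated for a general symmetric positive definite matrix in place of `Q`. -/
def fInfty {k₁ k₂ : ℕ} (Q : Matrix (Fin k₁ ⊕ Fin k₂) (Fin k₁ ⊕ Fin k₂) ℝ) (σ2 α : ℝ)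
    (γ : Fin k₂ → ℝ) (t : (Fin k₁ ⊕ Fin k₂) → ℝ) : ℝ :=
  let a := Real.exp (2 * α * k₂)
  let b := σ2 / α
  let S := Q.toBlocks₂₂ - Q.toBlocks₂₁ * Q.toBlocks₁₁⁻¹ * Q.toBlocks₁₂
  let w := (msqrt S).mulVec ((t ∘ Sum.inr) + γ)
  (2 * π * σ2) ^ (-((k₁ : ℝ) + k₂) / 2) * Real.sqrt Q.det *
    Real.exp (-(enorm2 ((msqrt Q.toBlocks₁₁).mulVec (t ∘ Sum.inl) +
        ((msqrt Q.toBlocks₁₁)⁻¹ * Q.toBlocks₁₂).mulVec (t ∘ Sum.inr))) ^ 2 / (2 * σ2)) *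
    (1 + Real.exp (-(α / σ2) * gfun a b (enorm2 w) ^ 2 + 2 * α * k₂)) ^ (k₂ : ℕ) *
    (1 + (2 * α / σ2) * gfun a b (enorm2 w) ^ 2 *
        (1 + Real.exp ((α / σ2) * gfun a b (enorm2 w) ^ 2 - 2 * α * k₂))⁻¹)⁻¹ *
    Real.exp (-(enorm2 (gdir a b w - (msqrt S).mulVec γ)) ^ 2 / (2 * σ2))


/-- The limiting law (12): the distribution of
`B_∞γ + C_∞Z₁ + [1 + exp(2αk₂) exp(−α‖Z₂ + (Q₂₂ − Q₂₁Q₁₁⁻¹Q₁₂)^{1/2}γ‖²/σ²)]⁻¹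
  · (D_∞Z₂ − B_∞γ)` with `Z₁ ~ N(0, σ²I_{k₁})`, `Z₂ ~ N(0, σ²I_{k₂})` independent. -/
def limitLaw {k₁ k₂ : ℕ} (Q : Matrix (Fin k₁ ⊕ Fin k₂) (Fin k₁ ⊕ Fin k₂) ℝ) (σ2 α : ℝ)
    (γ : Fin k₂ → ℝ) : Measure ((Fin k₁ ⊕ Fin k₂) → ℝ) :=
  ((gaussPi (Fin k₁) σ2).prod (gaussPi (Fin k₂) σ2)).map
    (fun Z : (Fin k₁ → ℝ) × (Fin k₂ → ℝ) =>
      (fromRows (Q.toBlocks₁₁⁻¹ * Q.toBlocks₁₂) (-1)).mulVec γ +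
      (fromRows (msqrt Q.toBlocks₁₁)⁻¹ 0).mulVec Z.1 +
      (1 + Real.exp (2 * α * k₂) *
          Real.exp (-α * (enorm2 (Z.2 +
            (msqrt (Q.toBlocks₂₂ - Q.toBlocks₂₁ * Q.toBlocks₁₁⁻¹ * Q.toBlocks₁₂)).mulVec
              γ)) ^ 2 / σ2))⁻¹ •
        ((fromRows
            (-(Q.toBlocks₁₁⁻¹ * Q.toBlocks₁₂ *
              (msqrt (Q.toBlocks₂₂ - Q.toBlocks₂₁ * Q.toBlocks₁₁⁻¹ * Q.toBlocks₁₂))⁻¹))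
            ((msqrt (Q.toBlocks₂₂ - Q.toBlocks₂₁ * Q.toBlocks₁₁⁻¹ * Q.toBlocks₁₂))⁻¹)).mulVec
            Z.2 -
          (fromRows (Q.toBlocks₁₁⁻¹ * Q.toBlocks₁₂) (-1)).mulVec γ))

/-!
For `a > 0` the scalar factor of `T` is logistic: `[1 + a exp(-r/b)]⁻¹ = σ(r/b - log a)` for the
sigmoid `σ`, so that `T x = σ(‖x‖²/b - log a) x`. Differentiating a radial field `φ(‖x‖²) x` gives
`φ(‖x‖²) I + 2 φ'(‖x‖²) xxᵀ`, and the logistic equation `σ' = σ (1 - σ)` turns this into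
`σ (I + 2b⁻¹ (1 - σ) xxᵀ)`. Its determinant follows from the matrix determinant lemma, and the two
exponential expressions in the theorem are both ways of writing `1 - σ(r/b - log a)`.
-/

theorem det_one_add_smul_vecMulVec {ι R : Type*} [Fintype ι] [DecidableEq ι] [CommRing R]
    (c : R) (u v : ι → R) : (1 + c • vecMulVec u v).det = 1 + c * (v ⬝ᵥ u) := by
  rw [← smul_vecMulVec, vecMulVec_eq Unit, det_one_add_replicateCol_mul_replicateRow,
    dotProduct_smul, smul_eq_mul]

section RadialField

variable {ι 𝕜 : Type*} [Fintype ι] [NontriviallyNormedField 𝕜] [CompleteSpace 𝕜]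

theorem hasFDerivAt_dotProduct_self (x : ι → 𝕜) :
    HasFDerivAt (fun y : ι → 𝕜 => y ⬝ᵥ y)
      ((2 : 𝕜) • LinearMap.toContinuousLinearMap (dotProductBilin 𝕜 𝕜 x)) x := by
  have coordinate (i : ι) := hasFDerivAt_apply (𝕜 := 𝕜) (F' := fun _ : ι => 𝕜) i x
  refine (HasFDerivAt.fun_sum fun i _ => (coordinate i).mul (coordinate i)).congr_fderiv ?_
  ext v
  simp [dotProduct, two_mul, Finset.sum_add_distrib]

theorem hasFDerivAt_comp_dotProduct_self_smul [DecidableEq ι] {φ : 𝕜 → 𝕜} {φ' : 𝕜} {x : ι → 𝕜}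
    (hφ : HasDerivAt φ φ' (x ⬝ᵥ x)) :
    HasFDerivAt (fun y : ι → 𝕜 => φ (y ⬝ᵥ y) • y)
      (LinearMap.toContinuousLinearMap
        (toLin' (φ (x ⬝ᵥ x) • (1 : Matrix ι ι 𝕜) + (2 * φ') • vecMulVec x x))) x := by
  have factor : HasFDerivAt (fun y : ι → 𝕜 => φ (y ⬝ᵥ y)) _ x :=
    HasDerivAt.comp_hasFDerivAt (f := fun y : ι → 𝕜 => y ⬝ᵥ y) x hφ
      (hasFDerivAt_dotProduct_self x)
  refine (factor.smul (hasFDerivAt_id x)).congr_fderiv ?_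
  refine ContinuousLinearMap.ext fun v => ?_
  ext i
  simp only [id_eq, _root_.add_apply, _root_.smul_apply, ContinuousLinearMap.id_apply,
    ContinuousLinearMap.smulRight_apply, LinearMap.coe_toContinuousLinearMap',
    dotProductBilin_apply_apply, smul_eq_mul, Pi.add_apply, Pi.smul_apply, toLin'_apply,
    add_mulVec, smul_mulVec, one_mulVec, vecMulVec_mulVec, op_smul_eq_smul]
  ring

end RadialField

theorem inv_one_add_mul_exp_neg_div {a : ℝ} (ha : 0 < a) (r b : ℝ) :
    (1 + a * exp (-r / b))⁻¹ = sigmoid (r / b - log a) := by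
  rw [sigmoid_def, neg_sub, sub_eq_add_neg, exp_add, exp_log ha, neg_div]

theorem inv_one_add_inv_mul_exp_div {a : ℝ} (ha : 0 < a) (r b : ℝ) :
    (1 + a⁻¹ * exp (r / b))⁻¹ = 1 - sigmoid (r / b - log a) := by
  rw [← sigmoid_neg, sigmoid_def, neg_neg, exp_sub, exp_log ha, inv_mul_eq_div]

theorem mul_exp_neg_div_mul_sigmoid {a : ℝ} (ha : 0 < a) (r b : ℝ) :
    a * exp (-r / b) * sigmoid (r / b - log a) = 1 - sigmoid (r / b - log a) := by
  rw [← sigmoid_neg, ← sigmoid_mul_rexp_neg, neg_sub, exp_sub, exp_log ha, neg_div, exp_neg,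
    ← div_eq_mul_inv, mul_comm]

theorem hasDerivAt_sigmoid_div_sub (b c r : ℝ) :
    HasDerivAt (fun s => sigmoid (s / b - c))
      (b⁻¹ * (sigmoid (r / b - c) * (1 - sigmoid (r / b - c)))) r := by
  have inner := ((hasDerivAt_id r).div_const b).sub_const c
  simpa only [one_div, mul_comm] using! (hasDerivAt_sigmoid (r / b - c)).comp r inner

theorem hasFDerivAt_sigmoid_dotProduct_self_smul {ι : Type*} [Fintype ι] [DecidableEq ι]
    (b c : ℝ) (x : ι → ℝ) :
    HasFDerivAt (fun y : ι → ℝ => sigmoid (y ⬝ᵥ y / b - c) • y)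
      (LinearMap.toContinuousLinearMap (toLin' (sigmoid (x ⬝ᵥ x / b - c) •
        ((1 : Matrix ι ι ℝ) +
          (2 * b⁻¹ * (1 - sigmoid (x ⬝ᵥ x / b - c))) • vecMulVec x x)))) x := by
  convert hasFDerivAt_comp_dotProduct_self_smul (hasDerivAt_sigmoid_div_sub b c (x ⬝ᵥ x)) using 3
  module

theorem enorm2_sq {ι : Type*} [Fintype ι] (x : ι → ℝ) : enorm2 x ^ 2 = x ⬝ᵥ x := by
  simp only [dotProduct, ← sq]
  exact sq_sqrt (Finset.sum_nonneg fun i _ => sq_nonneg (x i))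

theorem statement17_general {ι : Type*} [Fintype ι] [DecidableEq ι] {a b : ℝ} (ha : 0 < a)
    (hb : 0 < b) (x : ι → ℝ) :
    HasFDerivAt (fun x : ι → ℝ => (1 + a * exp (-(enorm2 x) ^ 2 / b))⁻¹ • x)
      (LinearMap.toContinuousLinearMap (toLin'
        ((1 + a * exp (-(enorm2 x) ^ 2 / b))⁻¹ •
          ((1 : Matrix ι ι ℝ) +
            (2 * a * b⁻¹ * exp (-(enorm2 x) ^ 2 / b) *
              (1 + a * exp (-(enorm2 x) ^ 2 / b))⁻¹) • vecMulVec x x)))) x ∧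
    ((1 + a * exp (-(enorm2 x) ^ 2 / b))⁻¹ •
        ((1 : Matrix ι ι ℝ) +
          (2 * a * b⁻¹ * exp (-(enorm2 x) ^ 2 / b) *
            (1 + a * exp (-(enorm2 x) ^ 2 / b))⁻¹) • vecMulVec x x)).det =
      ((1 + a * exp (-(enorm2 x) ^ 2 / b)) ^ Fintype.card ι)⁻¹ *
        (1 + 2 * b⁻¹ * (1 + a⁻¹ * exp ((enorm2 x) ^ 2 / b))⁻¹ * (enorm2 x) ^ 2) ∧
    0 < ((1 + a * exp (-(enorm2 x) ^ 2 / b)) ^ Fintype.card ι)⁻¹ *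
        (1 + 2 * b⁻¹ * (1 + a⁻¹ * exp ((enorm2 x) ^ 2 / b))⁻¹ * (enorm2 x) ^ 2) := by
  have coefficient : 2 * a * b⁻¹ * exp (-(x ⬝ᵥ x) / b) * sigmoid (x ⬝ᵥ x / b - log a) =
      2 * b⁻¹ * (1 - sigmoid (x ⬝ᵥ x / b - log a)) := by
    rw [← mul_exp_neg_div_mul_sigmoid ha]
    ring
  refine ⟨?_, ?_, by positivity⟩
  · simp only [enorm2_sq, inv_one_add_mul_exp_neg_div ha, coefficient]
    exact hasFDerivAt_sigmoid_dotProduct_self_smul b (log a) x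
  · simp only [← inv_pow, enorm2_sq, inv_one_add_mul_exp_neg_div ha,
      inv_one_add_inv_mul_exp_div ha, coefficient, det_smul,
      det_one_add_smul_vecMulVec]

/-- `T(x) = [1 + a exp(−‖x‖²/b)]⁻¹ x` is differentiable with derivative
matrix `[1 + a e^{−‖x‖²/b}]⁻¹ (I_m + 2ab⁻¹ e^{−‖x‖²/b}[1 + a e^{−‖x‖²/b}]⁻¹ xx')`, whose
determinant is `[1 + a e^{−‖x‖²/b}]^{−m} (1 + 2b⁻¹[1 + a⁻¹e^{‖x‖²/b}]⁻¹‖x‖²) > 0`. -/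
theorem statement17 (a b : ℝ) (ha : 0 < a) (hb : 0 < b) (m : ℕ) (hm : 0 < m)
    (x : Fin m → ℝ) :
    HasFDerivAt (fun x : Fin m → ℝ => (1 + a * Real.exp (-(enorm2 x) ^ 2 / b))⁻¹ • x)
      (LinearMap.toContinuousLinearMap (Matrix.toLin'
        ((1 + a * Real.exp (-(enorm2 x) ^ 2 / b))⁻¹ •
          ((1 : Matrix (Fin m) (Fin m) ℝ) +
            (2 * a * b⁻¹ * Real.exp (-(enorm2 x) ^ 2 / b) *
              (1 + a * Real.exp (-(enorm2 x) ^ 2 / b))⁻¹) • vecMulVec x x)))) x ∧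
    ((1 + a * Real.exp (-(enorm2 x) ^ 2 / b))⁻¹ •
        ((1 : Matrix (Fin m) (Fin m) ℝ) +
          (2 * a * b⁻¹ * Real.exp (-(enorm2 x) ^ 2 / b) *
            (1 + a * Real.exp (-(enorm2 x) ^ 2 / b))⁻¹) • vecMulVec x x)).det =
      ((1 + a * Real.exp (-(enorm2 x) ^ 2 / b)) ^ m)⁻¹ *
        (1 + 2 * b⁻¹ * (1 + a⁻¹ * Real.exp ((enorm2 x) ^ 2 / b))⁻¹ * (enorm2 x) ^ 2) ∧
    0 < ((1 + a * Real.exp (-(enorm2 x) ^ 2 / b)) ^ m)⁻¹ *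
        (1 + 2 * b⁻¹ * (1 + a⁻¹ * Real.exp ((enorm2 x) ^ 2 / b))⁻¹ * (enorm2 x) ^ 2) := by
  simpa only [Fintype.card_fin] using statement17_general ha hb x

end
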